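/- arXiv:2204.02745 — 2 statements merged into one kernel-verified Lean document; each statement's English description precedes it below -/
import Mathlib

section
/- Let v be holomorphic on a neighborhood of the closed unit disk with v(0) = 0, v'(0) = -ω for some ω > 0, v(z) ≠ 0 for 0 < |z| ≤ 1, and Re(conj(z) v(z)) < 0 on the unit circle. Let f_t be the flow of v. Then for each z in the open unit disk, the limit h(z) := lim_{t→∞} e^{ωt} f_t(z) exists, the convergence is locally uniform, h is holomorphic on the disk with h'(0) = 1, and h satisfies the functional equation ω h(z) = -h'(z) v(z) for all z in the disk. -/
open Complex Metric Filter Topology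

/-- Grönwall estimate for a scalar linear equation `u' = a u` with `Re a ≤ B'`. -/
lemma norm_le_exp_mul_of_hasDerivAt_mul {u a : ℝ → ℂ} {B b : ℝ → ℝ}
    (hu : ∀ t, 0 ≤ t → HasDerivAt u (a t * u t) t)
    (hB : ∀ t, HasDerivAt B (b t) t) (hab : ∀ t, 0 ≤ t → (a t).re ≤ b t)
    {t : ℝ} (ht : 0 ≤ t) : ‖u t‖ ≤ Real.exp (B t - B 0) * ‖u 0‖ := by
  have hN : ∀ s, 0 ≤ s → HasDerivAt (fun s => ‖u s‖ ^ 2 * Real.exp (-2 * B s))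
      (2 * ((a s).re - b s) * (‖u s‖ ^ 2 * Real.exp (-2 * B s))) s := by
    intro s hs
    have h1 := (hu s hs).norm_sq
    have h2 := ((hB s).const_mul (-2)).exp
    refine (h1.mul h2).congr_deriv ?_
    have h3 : inner ℝ (u s) (a s * u s) = (a s).re * ‖u s‖ ^ 2 := by
      rw [Complex.inner, ← Complex.normSq_eq_norm_sq, Complex.normSq_apply]
      simp
      ring
    rw [h3]
    ring
  have hanti : AntitoneOn (fun s => ‖u s‖ ^ 2 * Real.exp (-2 * B s)) (Set.Ici 0) := by
    refine antitoneOn_of_deriv_nonpos (convex_Ici 0)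
      (fun s hs => (hN s hs).continuousAt.continuousWithinAt) ?_ ?_
    · intro s hs
      exact (hN s (interior_subset hs)).differentiableAt.differentiableWithinAt
    · intro s hs
      have hs' : (0 : ℝ) ≤ s := interior_subset hs
      rw [(hN s hs').deriv]
      have := hab s hs'
      exact mul_nonpos_of_nonpos_of_nonneg (by linarith) (by positivity)
  have key := hanti Set.self_mem_Ici ht ht
  simp only at key
  refine le_of_sq_le_sq ?_ (by positivity)
  calc ‖u t‖ ^ 2 = ‖u t‖ ^ 2 * Real.exp (-2 * B t) * Real.exp (2 * B t) := by
        rw [mul_assoc, ← Real.exp_add]; simp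
    _ ≤ ‖u 0‖ ^ 2 * Real.exp (-2 * B 0) * Real.exp (2 * B t) := by gcongr
    _ = (Real.exp (B t - B 0) * ‖u 0‖) ^ 2 := by
        rw [mul_assoc, ← Real.exp_add, mul_pow, ← Real.exp_nat_mul, mul_comm]
        congr 2
        push_cast
        ring

/-- The inward-pointing condition on the unit circle propagates to the closed disk: by the maximum
principle, `Re (v z / z)` is bounded above by a negative constant. -/
lemma exists_pos_re_dslope_le {v : ℂ → ℂ} {U : Set ℂ} (hU : IsOpen U)
    (hsub : closedBall (0 : ℂ) 1 ⊆ U) (hv : DifferentiableOn ℂ v U) (h0 : v 0 = 0)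
    (hb : ∀ z : ℂ, ‖z‖ = 1 → ((starRingEnd ℂ) z * v z).re < 0) :
    ∃ c : ℝ, 0 < c ∧ ∀ z ∈ closedBall (0 : ℂ) 1, (dslope v 0 z).re ≤ -c := by
  have hp : DifferentiableOn ℂ (dslope v 0) U :=
    (Complex.differentiableOn_dslope (hU.mem_nhds (hsub (by simp)))).2 hv
  have hneg : ∀ z : ℂ, ‖z‖ = 1 → (dslope v 0 z).re < 0 := by
    intro z hz
    have h1 := sub_smul_dslope v 0 z
    rw [h0, sub_zero, sub_zero, smul_eq_mul] at h1
    have h2 := hb z hz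
    rwa [← h1, ← mul_assoc, ← Complex.normSq_eq_conj_mul_self, Complex.normSq_eq_norm_sq, hz,
      one_pow, Complex.ofReal_one, one_mul] at h2
  have hcont : ContinuousOn (fun z => (dslope v 0 z).re) (sphere (0 : ℂ) 1) :=
    Complex.continuous_re.comp_continuousOn
      (hp.continuousOn.mono (sphere_subset_closedBall.trans hsub))
  obtain ⟨w, hw, hmax⟩ := (isCompact_sphere (0 : ℂ) 1).exists_isMaxOn ⟨1, by simp⟩ hcont
  refine ⟨-(dslope v 0 w).re, neg_pos.2 (hneg w (by simpa using hw)), fun z hz => ?_⟩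
  have hd : DiffContOnCl ℂ (fun z => Complex.exp (dslope v 0 z)) (ball (0 : ℂ) 1) := by
    refine DifferentiableOn.diffContOnCl ?_
    rw [closure_ball (0 : ℂ) one_ne_zero]
    exact (hp.mono hsub).cexp
  have key := Complex.norm_le_of_forall_mem_frontier_norm_le (C := Real.exp (dslope v 0 w).re)
    isBounded_ball hd (z := z) (fun y hy => by
      rw [frontier_ball (0 : ℂ) one_ne_zero] at hy
      rw [Complex.norm_exp]
      exact Real.exp_le_exp.2 (hmax hy))
    (by rwa [closure_ball (0 : ℂ) one_ne_zero])
  rw [Complex.norm_exp, Real.exp_le_exp] at key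
  simpa using key

/-- Along every trajectory `u` in the disk, `e^{ωt} u t` is Cauchy as `t → ∞`, with an exponential
rate which is uniform in the trajectory. -/
lemma exists_norm_exp_mul_sub_le {v : ℂ → ℂ} {U : Set ℂ} (hU : IsOpen U)
    (hsub : closedBall (0 : ℂ) 1 ⊆ U) (hv : DifferentiableOn ℂ v U) (h0 : v 0 = 0)
    {ω : ℝ} (hv' : deriv v 0 = -(ω : ℂ))
    (hb : ∀ z : ℂ, ‖z‖ = 1 → ((starRingEnd ℂ) z * v z).re < 0) :
    ∃ c D : ℝ, 0 < c ∧ 0 ≤ D ∧ ∀ u : ℝ → ℂ, (∀ t, 0 ≤ t → u t ∈ ball (0 : ℂ) 1) →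
      (∀ t, 0 ≤ t → HasDerivAt u (v (u t)) t) → ∀ s t : ℝ, 0 ≤ s → s ≤ t →
      ‖Complex.exp ((ω : ℂ) * t) * u t - Complex.exp ((ω : ℂ) * s) * u s‖
        ≤ D * ‖u 0‖ ^ 2 * Real.exp (-c * s) := by
  obtain ⟨c, hc, hpc⟩ := exists_pos_re_dslope_le hU hsub hv h0 hb
  have hU0 : U ∈ 𝓝 (0 : ℂ) := hU.mem_nhds (hsub (by simp))
  have hq : DifferentiableOn ℂ (dslope (dslope v 0) 0) U :=
    (Complex.differentiableOn_dslope hU0).2 ((Complex.differentiableOn_dslope hU0).2 hv)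
  obtain ⟨M, hM⟩ := (isCompact_closedBall (0 : ℂ) 1).exists_bound_of_continuousOn
    (hq.continuousOn.mono hsub)
  have hM0 : 0 ≤ M := (norm_nonneg _).trans (hM 0 (by simp))
  have hvp : ∀ z, v z = dslope v 0 z * z := by
    intro z
    have h1 := sub_smul_dslope v 0 z
    rw [h0, sub_zero, sub_zero, smul_eq_mul] at h1
    rw [← h1, mul_comm]
  have hpq : ∀ z ∈ closedBall (0 : ℂ) 1, ‖ω + dslope v 0 z‖ ≤ M * ‖z‖ := by
    intro z hz
    have h1 := sub_smul_dslope (dslope v 0) 0 z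
    rw [dslope_same, hv', sub_zero, smul_eq_mul, sub_neg_eq_add] at h1
    rw [add_comm, ← h1, norm_mul, mul_comm]
    gcongr
    exact hM z hz
  refine ⟨c, M * Real.exp (M / c) / c, hc, by positivity, fun u hu hode s t hs hst => ?_⟩
  have hucl : ∀ t, 0 ≤ t → u t ∈ closedBall (0 : ℂ) 1 :=
    fun t ht => ball_subset_closedBall (hu t ht)
  have hu0 : ‖u 0‖ ≤ 1 := by simpa using hucl 0 le_rfl
  have hdecay : ∀ t, 0 ≤ t → ‖u t‖ ≤ Real.exp (-c * t) * ‖u 0‖ := by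
    intro t ht
    have := norm_le_exp_mul_of_hasDerivAt_mul (u := u) (a := fun t => dslope v 0 (u t))
      (B := fun t => -c * t) (b := fun _ => -c) (fun t ht => by rw [← hvp]; exact hode t ht)
      (fun t => by simpa using (hasDerivAt_id t).const_mul (-c))
      (fun t ht => hpc _ (hucl t ht)) ht
    simpa using this
  set g : ℝ → ℂ := fun t => Complex.exp ((ω : ℂ) * t) * u t with hg
  have hg0 : g 0 = u 0 := by simp [hg]
  have hgd : ∀ t, 0 ≤ t → HasDerivAt g ((ω + dslope v 0 (u t)) * g t) t := by
    intro t ht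
    have h1 : HasDerivAt (fun t : ℝ => Complex.exp ((ω : ℂ) * t))
        (Complex.exp ((ω : ℂ) * t) * ω) t := by
      simpa using ((Complex.ofRealCLM.hasDerivAt (x := t)).const_mul (ω : ℂ)).cexp
    refine (h1.mul (hode t ht)).congr_deriv ?_
    rw [hvp (u t), hg]
    ring
  have hcoef : ∀ t, 0 ≤ t → ‖ω + dslope v 0 (u t)‖ ≤ M * ‖u 0‖ * Real.exp (-c * t) := by
    intro t ht
    calc ‖ω + dslope v 0 (u t)‖ ≤ M * ‖u t‖ := hpq _ (hucl t ht)
      _ ≤ M * (Real.exp (-c * t) * ‖u 0‖) := by gcongr; exact hdecay t ht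
      _ = _ := by ring
  have hexp : ∀ A t : ℝ, HasDerivAt (fun t => -(A / c) * Real.exp (-c * t))
      (A * Real.exp (-c * t)) t := by
    intro A t
    refine ((((hasDerivAt_id t).const_mul (-c)).exp).const_mul (-(A / c))).congr_deriv ?_
    simp only [id]
    field_simp
  have hgbd : ∀ t, 0 ≤ t → ‖g t‖ ≤ Real.exp (M / c) * ‖u 0‖ := by
    intro t ht
    have h1 := norm_le_exp_mul_of_hasDerivAt_mul hgd (hexp M) (fun s hs => by
      calc ((ω : ℂ) + dslope v 0 (u s)).re ≤ ‖ω + dslope v 0 (u s)‖ := Complex.re_le_norm _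
        _ ≤ M * ‖u 0‖ * Real.exp (-c * s) := hcoef s hs
        _ ≤ M * 1 * Real.exp (-c * s) := by gcongr
        _ = M * Real.exp (-c * s) := by ring) ht
    rw [hg0] at h1
    refine h1.trans ?_
    gcongr
    have : 0 ≤ M / c * Real.exp (-c * t) := by positivity
    simp only [mul_zero, Real.exp_zero]
    linarith
  set A : ℝ := M * Real.exp (M / c) * ‖u 0‖ ^ 2 with hA
  have hA0 : 0 ≤ A := by positivity
  have key := image_norm_le_of_norm_deriv_right_le_deriv_boundary (a := s) (b := t)
    (f := fun r => g r - g s) (f' := fun r => (ω + dslope v 0 (u r)) * g r)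
    (B := fun r => -(A / c) * Real.exp (-c * r) - -(A / c) * Real.exp (-c * s))
    (B' := fun r => A * Real.exp (-c * r))
    (fun r hr => ((hgd r (hs.trans hr.1)).sub_const _).continuousAt.continuousWithinAt)
    (fun r hr => ((hgd r (hs.trans hr.1)).sub_const _).hasDerivWithinAt)
    (by simp) (fun r => (hexp A r).sub_const _)
    (fun r hr => by
      have hr0 := hs.trans hr.1
      rw [norm_mul]
      calc _ ≤ (M * ‖u 0‖ * Real.exp (-c * r)) * (Real.exp (M / c) * ‖u 0‖) := by
            gcongr
            · exact hcoef r hr0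
            · exact hgbd r hr0
        _ = A * Real.exp (-c * r) := by rw [hA]; ring)
    (Set.right_mem_Icc.2 hst)
  refine key.trans ?_
  have h1 : 0 ≤ A / c * Real.exp (-c * t) := by positivity
  have h2 : M * Real.exp (M / c) / c * ‖u 0‖ ^ 2 = A / c := by rw [hA]; ring
  rw [h2]
  linarith

/-- The flow of a holomorphic vector field has the semigroup property. -/
lemma flow_add {v : ℂ → ℂ} {U : Set ℂ} (hU : IsOpen U)
    (hsub : closedBall (0 : ℂ) 1 ⊆ U) (hv : DifferentiableOn ℂ v U) {f : ℝ → ℂ → ℂ}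
    (hf0 : ∀ z ∈ ball (0 : ℂ) 1, f 0 z = z)
    (hmem : ∀ t : ℝ, 0 ≤ t → ∀ z ∈ ball (0 : ℂ) 1, f t z ∈ ball (0 : ℂ) 1)
    (hode : ∀ z ∈ ball (0 : ℂ) 1, ∀ t : ℝ, 0 ≤ t →
      HasDerivAt (fun s : ℝ => f s z) (v (f t z)) t)
    {s t : ℝ} (hs : 0 ≤ s) (ht : 0 ≤ t) {z : ℂ} (hz : z ∈ ball (0 : ℂ) 1) :
    f (s + t) z = f t (f s z) := by
  obtain ⟨K, hK⟩ := (((hv.contDiffOn hU (n := 1)).mono hsub).restrict_scalars ℝ).exists_lipschitzOnWith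
    one_ne_zero (convex_closedBall (0 : ℂ) 1) (isCompact_closedBall (0 : ℂ) 1)
  have hfs := hmem s hs z hz
  have h1 : ∀ r, 0 ≤ r → HasDerivAt (fun r => f (s + r) z) (v (f (s + r) z)) r := fun r hr =>
    HasDerivAt.comp_const_add (f := fun r => f r z) s r (hode z hz (s + r) (by positivity))
  exact ODE_solution_unique_of_mem_Icc_right (v := fun _ => v) (s := fun _ => closedBall (0 : ℂ) 1)
    (f := fun r => f (s + r) z) (g := fun r => f r (f s z)) (a := 0) (b := t)
    (fun _ _ => hK)
    (fun r hr => (h1 r hr.1).continuousAt.continuousWithinAt)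
    (fun r hr => (h1 r hr.1).hasDerivWithinAt)
    (fun r hr => ball_subset_closedBall (hmem _ (add_nonneg hs hr.1) z hz))
    (fun r hr => (hode _ hfs r hr.1).continuousAt.continuousWithinAt)
    (fun r hr => (hode _ hfs r hr.1).hasDerivWithinAt)
    (fun r hr => ball_subset_closedBall (hmem r hr.1 _ hfs))
    (by simp [hf0 _ hfs]) (Set.right_mem_Icc.2 ht)

/-- Linearization of a Markovian holomorphic vector field: `e^{ωt} f_t` converges locally
uniformly on the disk to a holomorphic function `h` with `h'(0) = 1` satisfying
`ω h(z) = -h'(z) v(z)`. -/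
theorem flow_linearization
    (v : ℂ → ℂ) (U : Set ℂ) (hU : IsOpen U)
    (hsub : closedBall (0 : ℂ) 1 ⊆ U)
    (hv : DifferentiableOn ℂ v U)
    (h0 : v 0 = 0) (ω : ℝ) (hω : 0 < ω) (hv' : deriv v 0 = -(ω : ℂ))
    (hnz : ∀ z : ℂ, 0 < ‖z‖ → ‖z‖ ≤ 1 → v z ≠ 0)
    (hb : ∀ z : ℂ, ‖z‖ = 1 → ((starRingEnd ℂ) z * v z).re < 0)
    (f : ℝ → ℂ → ℂ)
    (hf0 : ∀ z ∈ ball (0 : ℂ) 1, f 0 z = z)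
    (hmem : ∀ t : ℝ, 0 ≤ t → ∀ z ∈ ball (0 : ℂ) 1, f t z ∈ ball (0 : ℂ) 1)
    (hhol : ∀ t : ℝ, 0 ≤ t → DifferentiableOn ℂ (f t) (ball (0 : ℂ) 1))
    (hode : ∀ z ∈ ball (0 : ℂ) 1, ∀ t : ℝ, 0 ≤ t →
      HasDerivAt (fun s : ℝ => f s z) (v (f t z)) t) :
    ∃ h : ℂ → ℂ, DifferentiableOn ℂ h (ball (0 : ℂ) 1) ∧ deriv h 0 = 1 ∧
      (∀ z ∈ ball (0 : ℂ) 1,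
        Tendsto (fun t : ℝ => Complex.exp ((ω : ℂ) * t) * f t z) atTop (𝓝 (h z))) ∧
      TendstoLocallyUniformlyOn (fun t : ℝ => fun z : ℂ => Complex.exp ((ω : ℂ) * t) * f t z)
        h atTop (ball (0 : ℂ) 1) ∧
      (∀ z ∈ ball (0 : ℂ) 1, (ω : ℂ) * h z = - deriv h z * v z) := by
  obtain ⟨c, D, hc, hD, hcauchy⟩ := exists_norm_exp_mul_sub_le hU hsub hv h0 hv' hb
  set g : ℝ → ℂ → ℂ := fun t z => Complex.exp ((ω : ℂ) * t) * f t z with hg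
  have hgs : ∀ z ∈ ball (0 : ℂ) 1, ∀ s t, 0 ≤ s → s ≤ t →
      ‖g t z - g s z‖ ≤ D * ‖z‖ ^ 2 * Real.exp (-c * s) := by
    intro z hz s t hs hst
    have := hcauchy (fun t => f t z) (fun t ht => hmem t ht z hz) (hode z hz) s t hs hst
    rwa [hf0 z hz] at this
  have hexp0 : ∀ A : ℝ, Tendsto (fun s : ℝ => A * Real.exp (-c * s)) atTop (𝓝 0) := by
    intro A
    have h1 : Tendsto (fun s : ℝ => -c * s) atTop atBot :=
      tendsto_id.const_mul_atTop_of_neg (neg_neg_of_pos hc)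
    simpa using (Real.tendsto_exp_atBot.comp h1).const_mul A
  have hlim : ∀ z, ∃ l, z ∈ ball (0 : ℂ) 1 → Tendsto (fun t => g t z) atTop (𝓝 l) := by
    intro z
    by_cases hz : z ∈ ball (0 : ℂ) 1
    · have hC : CauchySeq (fun t => g t z) := by
        refine Metric.cauchySeq_iff'.2 fun ε hε => ?_
        obtain ⟨s, hs1, hs2⟩ := (((hexp0 (D * ‖z‖ ^ 2)).eventually_lt_const hε).and
          (eventually_ge_atTop 0)).exists
        exact ⟨s, fun t ht => by
          rw [dist_eq_norm]; exact (hgs z hz s t hs2 ht).trans_lt hs1⟩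
      obtain ⟨l, hl⟩ := cauchySeq_tendsto_of_complete hC
      exact ⟨l, fun _ => hl⟩
    · exact ⟨0, fun h => absurd h hz⟩
  choose h hh using hlim
  have hrate : ∀ z ∈ ball (0 : ℂ) 1, ∀ s, 0 ≤ s →
      ‖h z - g s z‖ ≤ D * ‖z‖ ^ 2 * Real.exp (-c * s) := by
    intro z hz s hs
    refine le_of_tendsto ((hh z hz).sub_const (g s z)).norm ?_
    filter_upwards [eventually_ge_atTop s] with t ht using hgs z hz s t hs ht
  have hunif : TendstoUniformlyOn g h atTop (ball (0 : ℂ) 1) := by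
    refine Metric.tendstoUniformlyOn_iff.2 fun ε hε => ?_
    filter_upwards [(hexp0 D).eventually_lt_const hε, eventually_ge_atTop 0] with s hs1 hs2 z hz
    rw [dist_eq_norm]
    refine ((hrate z hz s hs2).trans ?_).trans_lt hs1
    have hz1 : ‖z‖ ^ 2 ≤ 1 := pow_le_one₀ (norm_nonneg _) (by simpa using (mem_ball.1 hz).le)
    gcongr
    exact mul_le_of_le_one_right hD hz1
  have hloc := hunif.tendstoLocallyUniformlyOn
  have hdiff : DifferentiableOn ℂ h (ball (0 : ℂ) 1) := by
    refine hloc.differentiableOn ?_ isOpen_ball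
    filter_upwards [eventually_ge_atTop 0] with t ht using (hhol t ht).const_mul _
  have hquad : ∀ z ∈ ball (0 : ℂ) 1, ‖h z - z‖ ≤ D * ‖z‖ ^ 2 := by
    intro z hz
    simpa [hg, hf0 z hz] using hrate z hz 0 le_rfl
  refine ⟨h, hdiff, ?_, hh, hloc, ?_⟩
  · have hz0 : h 0 = 0 := by simpa using hquad 0 (by simp)
    refine HasDerivAt.deriv (hasDerivAt_iff_isLittleO_nhds_zero.2 ?_)
    have hO : (fun w : ℂ => h (0 + w) - h 0 - w • (1 : ℂ)) =O[𝓝 0] fun w => ‖w‖ ^ 2 := by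
      refine Asymptotics.IsBigO.of_bound D ?_
      filter_upwards [ball_mem_nhds (0 : ℂ) one_pos] with w hw
      simpa [hz0] using hquad w hw
    exact hO.trans_isLittleO (Asymptotics.isLittleO_norm_pow_id one_lt_two)
  · intro z hz
    have hconj : ∀ s, 0 ≤ s → h (f s z) = Complex.exp (-(ω : ℂ) * s) * h z := by
      intro s hs
      have h1 := hh _ (hmem s hs z hz)
      have h2 : Tendsto (fun t => Complex.exp (-(ω : ℂ) * s) * g (s + t) z) atTop
          (𝓝 (Complex.exp (-(ω : ℂ) * s) * h z)) :=
        ((hh z hz).comp (tendsto_atTop_add_const_left _ s tendsto_id)).const_mul _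
      refine tendsto_nhds_unique (h1.congr' ?_) h2
      filter_upwards [eventually_ge_atTop 0] with t ht
      simp only [hg]
      rw [flow_add hU hsub hv hf0 hmem hode hs ht hz, ← mul_assoc, ← Complex.exp_add]
      congr 2
      push_cast
      ring
    have hd1 : HasDerivWithinAt (fun s => h (f s z)) (deriv h z * v z) (Set.Ici 0) (0 : ℝ) := by
      have hhz : HasDerivAt h (deriv h z) z :=
        (hdiff.differentiableAt (isOpen_ball.mem_nhds hz)).hasDerivAt
      have hfz := (hode z hz 0 le_rfl).hasDerivWithinAt (s := Set.Ici 0)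
      rw [hf0 z hz] at hfz
      exact hhz.comp_hasDerivWithinAt_of_eq (0 : ℝ) hfz (hf0 z hz).symm
    have hd2 : HasDerivWithinAt (fun s => h (f s z)) (-(ω : ℂ) * h z) (Set.Ici 0) (0 : ℝ) := by
      have h1 : HasDerivAt (fun s : ℝ => Complex.exp (-(ω : ℂ) * s) * h z)
          (-(ω : ℂ) * h z) (0 : ℝ) := by
        simpa using
          ((((Complex.ofRealCLM.hasDerivAt (x := 0)).const_mul (-(ω : ℂ))).cexp).mul_const (h z))
      exact h1.hasDerivWithinAt.congr (fun s hs => hconj s hs) (hconj 0 le_rfl)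
    have := (uniqueDiffWithinAt_Ici (0 : ℝ)).eq_deriv _ hd1 hd2
    linear_combination this
end

section
/- Let δ > 0 and let h be holomorphic and injective on the disk {|z| < 1 + δ} with h'(0) ≠ 0. Then there exist C > 0 and ρ ∈ (0,1) such that for all nonzero integers n, p: | ∫₀^{2π} ∫₀^{2π} log( |e^{iθ} - e^{iθ'}| / |h(e^{iθ}) - h(e^{iθ'})| ) e^{-inθ} e^{-ipθ'} dθ dθ' | ≤ C ρ^{|n| + |p|}. -/
open Complex Metric
open Set Filter Topology

/-- An injective holomorphic function on an open set has nowhere vanishing derivative. -/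
theorem deriv_ne_zero_of_injOn {U : Set ℂ} (hU : IsOpen U) {f : ℂ → ℂ}
    (hf : DifferentiableOn ℂ f U) (hinj : InjOn f U) {z : ℂ} (hz : z ∈ U) : deriv f z ≠ 0 := by
  obtain ⟨r, hr, hrU⟩ := Metric.isOpen_iff.mp hU z hz
  have hfB : DifferentiableOn ℂ f (ball z r) := hf.mono hrU
  have hinjB : InjOn f (ball z r) := hinj.mono hrU
  have hzB : z ∈ ball z r := mem_ball_self hr
  have not_locally_const : ¬ ∀ᶠ w in 𝓝 z, f w = f z := by
    intro hconst
    have hne : ∀ᶠ w in 𝓝[≠] z, False := by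
      filter_upwards [nhdsWithin_le_nhds hconst, self_mem_nhdsWithin,
        nhdsWithin_le_nhds (isOpen_ball.mem_nhds hzB)] with w hw hwz hwB
      exact hwz (hinjB hwB hzB hw)
    exact (NeBot.ne inferInstance) (eventually_false_iff_eq_bot.mp hne)
  have hopen : ∀ s ⊆ ball z r, IsOpen s → IsOpen (f '' s) :=
    ((hfB.analyticOnNhd isOpen_ball).is_constant_or_isOpen
      (convex_ball z r).isPreconnected).resolve_left fun ⟨w, hw⟩ => not_locally_const <| by
        filter_upwards [isOpen_ball.mem_nhds hzB] with y hy
        rw [hw y hy, hw z hzB]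
  set g := Function.invFunOn f (ball z r)
  have hgf : ∀ w ∈ ball z r, g (f w) = w := hinjB.leftInvOn_invFunOn
  have hfg : ∀ y ∈ f '' ball z r, f (g y) = y := by
    rintro _ ⟨w, hw, rfl⟩
    rw [hgf w hw]
  have image_nhds : ∀ w ∈ ball z r, f '' ball z r ∈ 𝓝 (f w) := fun w hw =>
    (hopen _ subset_rfl isOpen_ball).mem_nhds (mem_image_of_mem f hw)
  have hgc : ∀ w ∈ ball z r, ContinuousAt g (f w) := by
    intro w hw s hs
    rw [hgf w hw] at hs
    obtain ⟨t, hts, ht, hwt⟩ := _root_.mem_nhds_iff.mp (inter_mem hs (isOpen_ball.mem_nhds hw))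
    refine mem_map.mpr (mem_of_superset
      ((hopen t (fun x hx => (hts hx).2) ht).mem_nhds (mem_image_of_mem f hwt)) ?_)
    rintro _ ⟨x, hx, rfl⟩
    rw [mem_preimage, hgf x (hts hx).2]
    exact (hts hx).1
  have hderiv : ∀ᶠ w in 𝓝[≠] z, deriv f w ≠ 0 := by
    refine ((hfB.deriv isOpen_ball).analyticAt
      (isOpen_ball.mem_nhds hzB)).eventually_eq_zero_or_eventually_ne_zero.resolve_left fun h0 => ?_
    obtain ⟨ε, hε, hball⟩ := Metric.eventually_nhds_iff_ball.mp
      (h0.and (isOpen_ball.mem_nhds hzB))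
    refine not_locally_const ?_
    filter_upwards [ball_mem_nhds z hε] with w hw
    refine isOpen_ball.is_const_of_deriv_eq_zero (convex_ball z ε).isPreconnected
      (hfB.mono fun x hx => (hball x hx).2) (fun x hx => (hball x hx).1) hw (mem_ball_self hε)
  have htend : Tendsto g (𝓝[≠] (f z)) (𝓝[≠] z) := by
    refine tendsto_nhdsWithin_iff.mpr ⟨?_, ?_⟩
    · have := (hgc z hzB).tendsto
      rw [hgf z hzB] at this
      exact this.mono_left nhdsWithin_le_nhds
    · filter_upwards [self_mem_nhdsWithin, nhdsWithin_le_nhds (image_nhds z hzB)] with y hy hyB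
      intro hgy
      exact hy (by rw [mem_singleton_iff, ← hfg y hyB, mem_singleton_iff.mp hgy])
  have hgd : DifferentiableAt ℂ g (f z) := by
    refine (analyticAt_of_differentiable_on_punctured_nhds_of_continuousAt ?_
      (hgc z hzB)).differentiableAt
    filter_upwards [htend.eventually hderiv, nhdsWithin_le_nhds (image_nhds z hzB)] with y hy hyB
    obtain ⟨w, hw, rfl⟩ := hyB
    rw [hgf w hw] at hy
    refine (HasDerivAt.of_local_left_inverse (f := f) (f' := deriv f w) (hgc w hw) ?_ hy
      ?_).differentiableAt
    · rw [hgf w hw]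
      exact (hfB.differentiableAt (isOpen_ball.mem_nhds hw)).hasDerivAt
    · filter_upwards [image_nhds w hw] with y hy using hfg y hy
  intro h0
  have hcomp : HasDerivAt (g ∘ f) (deriv g (f z) * deriv f z) z :=
    hgd.hasDerivAt.comp z (hfB.differentiableAt (isOpen_ball.mem_nhds hzB)).hasDerivAt
  have hid : HasDerivAt (g ∘ f) 1 z := (hasDerivAt_id z).congr_of_eventuallyEq <| by
    filter_upwards [isOpen_ball.mem_nhds hzB] with w hw using hgf w hw
  simpa [h0] using hcomp.unique hid

/-- A nonvanishing holomorphic function on a disk has a holomorphic logarithm. -/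
theorem exists_hasDerivAt_exp_eq {c : ℂ} {r : ℝ} {f : ℂ → ℂ} (hf : DifferentiableOn ℂ f (ball c r))
    (hne : ∀ z ∈ ball c r, f z ≠ 0) :
    ∃ L : ℂ → ℂ, ∀ z ∈ ball c r, HasDerivAt L (deriv f z / f z) z ∧ exp (L z) = f z := by
  rcases le_or_gt r 0 with hr | hr
  · exact ⟨0, by simp [ball_eq_empty.mpr hr]⟩
  obtain ⟨L, hLc, hL⟩ := (((hf.deriv isOpen_ball).div hf hne).isExactOn_ball).with_val_at c
    (log (f c))
  refine ⟨L, fun z hz => ⟨hL z hz, ?_⟩⟩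
  have hd : ∀ w ∈ ball c r, HasDerivAt (fun w => f w * exp (-L w)) 0 w := by
    intro w hw
    refine ((hf.differentiableAt (isOpen_ball.mem_nhds hw)).hasDerivAt.mul
      (hL w hw).neg.cexp).congr_deriv ?_
    have := hne w hw
    simp only [Pi.div_apply, Pi.neg_apply]
    field_simp
    ring
  have hcz : c ∈ ball c r := mem_ball_self hr
  have hconst := isOpen_ball.is_const_of_deriv_eq_zero (convex_ball c r).isPreconnected
    (fun w hw => (hd w hw).differentiableAt.differentiableWithinAt)
    (fun w hw => (hd w hw).deriv) hz hcz
  simp only [hLc, exp_neg, exp_log (hne c hcz), mul_inv_cancel₀ (hne c hcz)] at hconst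
  exact (mul_inv_eq_one₀ (exp_ne_zero _)).mp hconst |>.symm

theorem integral_exp_eq_circleIntegral (g : ℂ → ℂ) (n : ℤ) :
    ∫ θ in (0 : ℝ)..2 * Real.pi, g (exp (I * θ)) * exp (-I * n * θ) =
      -I * ∮ z in C(0, 1), z ^ (-n - 1) * g z := by
  rw [circleIntegral, ← intervalIntegral.integral_const_mul]
  refine intervalIntegral.integral_congr fun θ _ => ?_
  have hz : circleMap 0 1 θ = exp (I * θ) := by simp [circleMap, mul_comm]
  have hpow : exp (-I * n * θ) = exp (I * θ) ^ (-n) := by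
    rw [← exp_int_mul]; push_cast; ring_nf
  simp only [deriv_circleMap, hz, smul_eq_mul]
  rw [hpow, zpow_sub_one₀ (exp_ne_zero _)]
  have := exp_ne_zero (I * θ)
  field_simp
  rw [I_sq]; ring

theorem circleIntegral_zpow_mul_eq_of_le {r R₁ R₂ : ℝ} (h0 : 0 < R₁) (hle : R₁ ≤ R₂) (hr : R₂ < r)
    {g : ℂ → ℂ} (hg : DifferentiableOn ℂ g (ball 0 r)) (m : ℤ) :
    ∮ z in C(0, R₁), z ^ m * g z = ∮ z in C(0, R₂), z ^ m * g z := by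
  have hd : ∀ z ∈ closedBall (0 : ℂ) R₂ \ ball 0 R₁,
      DifferentiableAt ℂ (fun z => z ^ m * g z) z := by
    intro z hz
    have hz0 : z ≠ 0 := by
      rintro rfl
      exact hz.2 (mem_ball_self h0)
    exact (differentiableAt_zpow.mpr (Or.inl hz0)).mul
      (hg.differentiableAt (isOpen_ball.mem_nhds (closedBall_subset_ball hr hz.1)))
  exact (circleIntegral_eq_of_differentiable_on_annulus_off_countable h0 hle countable_empty
    (fun z hz => (hd z hz).continuousAt.continuousWithinAt)
    (fun z hz => hd z ⟨ball_subset_closedBall hz.1.1,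
      fun h => hz.1.2 (ball_subset_closedBall h)⟩)).symm

theorem circleIntegral_zpow_mul_eq_zero {r R : ℝ} (h0 : 0 ≤ R) (hr : R < r)
    {g : ℂ → ℂ} (hg : DifferentiableOn ℂ g (ball 0 r)) {m : ℤ} (hm : 0 ≤ m) :
    ∮ z in C(0, R), z ^ m * g z = 0 := by
  lift m to ℕ using hm
  simp only [zpow_natCast]
  exact (((differentiable_id.pow m).differentiableOn.mul hg).mono
    (closure_ball_subset_closedBall.trans
      (closedBall_subset_ball hr))).diffContOnCl.circleIntegral_eq_zero h0

/-- Nonzero Fourier coefficients on the unit circle of a holomorphic function bounded on a larger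
circle. -/
theorem norm_integral_exp_le {r R M : ℝ} (h1 : 1 ≤ R) (hr : R < r) {g : ℂ → ℂ}
    (hg : DifferentiableOn ℂ g (ball 0 r)) (hM : ∀ z ∈ sphere (0 : ℂ) R, ‖g z‖ ≤ M)
    {n : ℤ} (hn : n ≠ 0) :
    ‖∫ θ in (0 : ℝ)..2 * Real.pi, g (exp (I * θ)) * exp (-I * n * θ)‖ ≤
      2 * Real.pi * M * R⁻¹ ^ n.natAbs := by
  have hR : 0 < R := one_pos.trans_le h1
  have hM0 : 0 ≤ M := (norm_nonneg _).trans (hM R (by simp [hR.le]))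
  rw [integral_exp_eq_circleIntegral, norm_mul, norm_neg, norm_I, one_mul]
  rcases lt_or_gt_of_ne hn with hn | hn
  · rw [circleIntegral_zpow_mul_eq_zero zero_le_one (h1.trans_lt hr) hg (by lia), norm_zero]
    have := Real.pi_pos
    positivity
  · rw [circleIntegral_zpow_mul_eq_of_le one_pos h1 hr hg]
    lift n to ℕ using hn.le
    refine (circleIntegral.norm_integral_le_of_norm_le_const hR.le
      (C := R ^ (-(n : ℤ) - 1) * M) fun z hz => ?_).trans_eq ?_
    · rw [norm_mul, norm_zpow, mem_sphere_zero_iff_norm.mp hz]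
      gcongr
      exact hM z hz
    · rw [zpow_sub_one₀ hR.ne', zpow_neg, zpow_natCast, Int.natAbs_natCast, inv_pow]
      field_simp

/-- Positive Fourier coefficients of the real part of a holomorphic function, as a contour integral
of its derivative. -/
theorem integral_re_exp_eq_circleIntegral {r R : ℝ} (h1 : 1 ≤ R) (hr : R < r) {L L' : ℂ → ℂ}
    (hL : ∀ z ∈ ball (0 : ℂ) r, HasDerivAt L (L' z) z) {p : ℕ} (hp : p ≠ 0) :
    ∫ θ in (0 : ℝ)..2 * Real.pi, ((L (exp (I * θ))).re : ℂ) * exp (-I * p * θ) =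
      -I / (2 * p) * ∮ w in C(0, R), w ^ (-p : ℤ) * L' w := by
  have hR : 0 < R := one_pos.trans_le h1
  have hLd : DifferentiableOn ℂ L (ball 0 r) := fun z hz =>
    (hL z hz).differentiableAt.differentiableWithinAt
  have hLd' : DifferentiableOn ℂ L' (ball 0 r) :=
    (hLd.deriv isOpen_ball).congr fun z hz => ((hL z hz).deriv).symm
  have hcont : Continuous fun θ : ℝ => L (exp (I * θ)) :=
    hLd.continuousOn.comp_continuous (by fun_prop) fun θ => by
      rw [mem_ball_zero_iff, mul_comm, norm_exp_ofReal_mul_I]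
      exact h1.trans_lt hr
  have hneg : ∫ θ in (0 : ℝ)..2 * Real.pi, (starRingEnd ℂ) (L (exp (I * θ))) * exp (-I * p * θ) =
      0 := by
    have h := integral_exp_eq_circleIntegral L (-p)
    rw [circleIntegral_zpow_mul_eq_zero zero_le_one (h1.trans_lt hr) hLd (by lia), mul_zero] at h
    rw [← map_zero (starRingEnd ℂ), ← h, ← intervalIntegral.intervalIntegral_conj]
    refine intervalIntegral.integral_congr fun θ _ => ?_
    simp [← exp_conj]
  have hpos := integral_exp_eq_circleIntegral L p
  rw [circleIntegral_zpow_mul_eq_of_le one_pos h1 hr hLd] at hpos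
  have sphere_sub : sphere (0 : ℂ) R ⊆ ball 0 r :=
    sphere_subset_closedBall.trans (closedBall_subset_ball hr)
  have sphere_ne : ∀ w ∈ sphere (0 : ℂ) R, w ≠ 0 := fun w hw => ne_of_mem_sphere hw hR.ne'
  have zpow_cont : ∀ m : ℤ, ContinuousOn (fun w : ℂ => w ^ m) (sphere 0 R) := fun m w hw =>
    (continuousAt_zpow₀ w m (Or.inl (sphere_ne w hw))).continuousWithinAt
  have hparts : ∮ w in C(0, R), w ^ (-p : ℤ) * L' w =
      p * ∮ w in C(0, R), w ^ (-p - 1 : ℤ) * L w := by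
    rw [← sub_eq_zero, ← circleIntegral.integral_const_mul, ← circleIntegral.integral_sub]
    · refine circleIntegral.integral_eq_zero_of_hasDerivWithinAt hR.le
        (f := fun w => w ^ (-p : ℤ) * L w) fun w hw => ?_
      refine (((hasDerivAt_zpow (-p : ℤ) w (Or.inl (sphere_ne w hw))).mul
        (hL w (sphere_sub hw))).congr_deriv ?_).hasDerivWithinAt
      push_cast
      ring
    · exact ((zpow_cont _).mul (hLd'.continuousOn.mono sphere_sub)).circleIntegrable hR.le
    · exact (continuousOn_const.mul
        ((zpow_cont _).mul (hLd.continuousOn.mono sphere_sub))).circleIntegrable hR.le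
  have hsplit : ∀ θ : ℝ, ((L (exp (I * θ))).re : ℂ) * exp (-I * p * θ) =
      2⁻¹ * (L (exp (I * θ)) * exp (-I * p * θ) +
        (starRingEnd ℂ) (L (exp (I * θ))) * exp (-I * p * θ)) := fun θ => by
    rw [re_eq_add_conj]; ring
  simp_rw [hsplit]
  rw [intervalIntegral.integral_const_mul, intervalIntegral.integral_add, hneg, hparts]
  · push_cast at hpos
    rw [hpos]
    have : (p : ℂ) ≠ 0 := by exact_mod_cast hp
    field_simp
    ring
  · exact (hcont.mul (by fun_prop)).intervalIntegrable _ _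
  · exact ((continuous_conj.comp hcont).mul (by fun_prop)).intervalIntegrable _ _

/-- The partial derivative in `w` of `log ((h w - h z) / (w - z))`. -/
noncomputable def logDerivQuotient (h : ℂ → ℂ) (z w : ℂ) : ℂ :=
  deriv h w / (h w - h z) - 1 / (w - z)

theorem dslope_ne_zero_of_injOn {r : ℝ} {h : ℂ → ℂ} (hhol : DifferentiableOn ℂ h (ball (0 : ℂ) r))
    (hinj : InjOn h (ball (0 : ℂ) r)) {z w : ℂ} (hz : z ∈ ball (0 : ℂ) r)
    (hw : w ∈ ball (0 : ℂ) r) :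
    dslope h z w ≠ 0 := by
  rcases eq_or_ne w z with rfl | hne
  · rw [dslope_same]
    exact deriv_ne_zero_of_injOn isOpen_ball hhol hinj hw
  · rw [dslope_of_ne _ hne, slope_def_field]
    exact div_ne_zero (sub_ne_zero.mpr fun e => hne (hinj hw hz e)) (sub_ne_zero.mpr hne)

theorem deriv_dslope_div_dslope {r : ℝ} {h : ℂ → ℂ} (hhol : DifferentiableOn ℂ h (ball (0 : ℂ) r))
    (hinj : InjOn h (ball (0 : ℂ) r)) {z w : ℂ} (hz : z ∈ ball (0 : ℂ) r)
    (hw : w ∈ ball (0 : ℂ) r)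
    (hne : w ≠ z) : deriv (dslope h z) w / dslope h z w = logDerivQuotient h z w := by
  have hwz : w - z ≠ 0 := sub_ne_zero.mpr hne
  have hhwz : h w - h z ≠ 0 := sub_ne_zero.mpr fun e => hne (hinj hw hz e)
  have hderiv : HasDerivAt (slope h z)
      ((deriv h w * (w - z) - (h w - h z) * 1) / (w - z) ^ 2) w := by
    have hs : slope h z = fun w => (h w - h z) / (w - z) := by
      ext w; rw [slope_def_field]
    rw [hs]
    exact ((hhol.differentiableAt (isOpen_ball.mem_nhds hw)).hasDerivAt.sub_const _).div
      ((hasDerivAt_id w).sub_const z) hwz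
  rw [(dslope_eventuallyEq_slope_of_ne h hne).deriv_eq, hderiv.deriv, dslope_of_ne _ hne,
    slope_def_field, logDerivQuotient]
  field_simp

theorem integral_log_norm_quotient {r : ℝ} {h : ℂ → ℂ} (hhol : DifferentiableOn ℂ h (ball (0 : ℂ) r))
    (hinj : InjOn h (ball (0 : ℂ) r)) {R : ℝ} (h1 : 1 ≤ R) (hr : R < r) {z : ℂ} (hz : ‖z‖ < R)
    {p : ℕ} (hp : p ≠ 0) :
    ∫ θ in (0 : ℝ)..2 * Real.pi,
        (Real.log (‖z - exp (I * θ)‖ / ‖h z - h (exp (I * θ))‖) : ℂ) * exp (-I * p * θ) =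
      I / (2 * p) * ∮ w in C(0, R), w ^ (-p : ℤ) * logDerivQuotient h z w := by
  have hzr : z ∈ ball (0 : ℂ) r := by simpa using hz.trans hr
  obtain ⟨L, hL⟩ := exists_hasDerivAt_exp_eq
    ((differentiableOn_dslope (isOpen_ball.mem_nhds hzr)).mpr hhol)
    fun w hw => dslope_ne_zero_of_injOn hhol hinj hzr hw
  have hcongr : ∫ θ in (0 : ℝ)..2 * Real.pi,
        (Real.log (‖z - exp (I * θ)‖ / ‖h z - h (exp (I * θ))‖) : ℂ) * exp (-I * p * θ) =
      ∫ θ in (0 : ℝ)..2 * Real.pi, -(((L (exp (I * θ))).re : ℂ) * exp (-I * p * θ)) := by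
    refine intervalIntegral.integral_congr_ae ?_
    have hae := ((countable_singleton z).preimage_circleMap 0 one_ne_zero).ae_notMem
      MeasureTheory.volume
    filter_upwards [hae] with θ hθ _
    have hne : exp (I * θ) ≠ z := fun e => hθ (by simp [circleMap, mul_comm, ← e])
    have hmem : exp (I * θ) ∈ ball (0 : ℂ) r := by
      rw [mem_ball_zero_iff, mul_comm, norm_exp_ofReal_mul_I]
      exact h1.trans_lt hr
    have hexp := (hL _ hmem).2
    rw [dslope_of_ne _ hne, slope_def_field] at hexp
    have hre := congrArg (fun x => Real.log ‖x‖) hexp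
    simp only [norm_exp, Real.log_exp, norm_div] at hre
    rw [hre, norm_sub_rev z, norm_sub_rev (h z), ← inv_div, Real.log_inv]
    push_cast
    ring
  rw [hcongr, intervalIntegral.integral_neg,
    integral_re_exp_eq_circleIntegral h1 hr (fun w hw => (hL w hw).1) hp, neg_div, neg_mul, neg_neg]
  congr 1
  refine circleIntegral.integral_congr (zero_le_one.trans h1) fun w hw => ?_
  have hwR : ‖w‖ = R := mem_sphere_zero_iff_norm.mp hw
  rw [deriv_dslope_div_dslope hhol hinj hzr (by simpa [hwR] using hr)]
  rintro rfl
  exact hz.ne hwR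

theorem continuousOn_logDerivQuotient {r : ℝ} {h : ℂ → ℂ} (hhol : DifferentiableOn ℂ h (ball (0 : ℂ) r))
    (hinj : InjOn h (ball (0 : ℂ) r)) {R₁ R₂ : ℝ} (hR : R₁ < R₂) (hr : R₂ < r) :
    ContinuousOn (fun x : ℂ × ℂ => logDerivQuotient h x.1 x.2)
      (closedBall 0 R₁ ×ˢ sphere 0 R₂) := by
  have hfst : MapsTo Prod.fst (closedBall (0 : ℂ) R₁ ×ˢ sphere (0 : ℂ) R₂) (ball 0 r) :=
    fun x hx => closedBall_subset_ball (hR.trans hr) hx.1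
  have hsnd : MapsTo Prod.snd (closedBall (0 : ℂ) R₁ ×ˢ sphere (0 : ℂ) R₂) (ball 0 r) :=
    fun x hx => closedBall_subset_ball hr (sphere_subset_closedBall hx.2)
  have hne : ∀ x ∈ closedBall (0 : ℂ) R₁ ×ˢ sphere (0 : ℂ) R₂, x.2 ≠ x.1 := by
    rintro x ⟨hx1, hx2⟩ e
    rw [mem_sphere_zero_iff_norm, e] at hx2
    rw [mem_closedBall_zero_iff, hx2] at hx1
    exact hR.not_ge hx1
  refine ContinuousOn.sub (ContinuousOn.div
    ((hhol.deriv isOpen_ball).continuousOn.comp continuousOn_snd hsnd)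
    ((hhol.continuousOn.comp continuousOn_snd hsnd).sub
      (hhol.continuousOn.comp continuousOn_fst hfst)) fun x hx => ?_)
    (continuousOn_const.div (continuousOn_snd.sub continuousOn_fst)
      fun x hx => sub_ne_zero.mpr (hne x hx))
  exact sub_ne_zero.mpr fun e => hne x hx (hinj (hsnd hx) (hfst hx) e)

theorem differentiableOn_logDerivQuotient {r : ℝ} {h : ℂ → ℂ} (hhol : DifferentiableOn ℂ h (ball (0 : ℂ) r))
    (hinj : InjOn h (ball (0 : ℂ) r)) {w : ℂ} (hw : w ∈ ball (0 : ℂ) r) :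
    DifferentiableOn ℂ (fun z => logDerivQuotient h z w) (ball 0 ‖w‖) := by
  have hsub : ball (0 : ℂ) ‖w‖ ⊆ ball 0 r := ball_subset_ball (mem_ball_zero_iff.mp hw).le
  have hne : ∀ z ∈ ball (0 : ℂ) ‖w‖, w ≠ z := by
    rintro z hz rfl
    simp at hz
  refine DifferentiableOn.sub (DifferentiableOn.div (differentiableOn_const _)
    ((differentiableOn_const _).sub (hhol.mono hsub)) fun z hz => ?_)
    ((differentiableOn_const _).div ((differentiableOn_const _).sub differentiableOn_id)
      fun z hz => sub_ne_zero.mpr (hne z hz))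
  exact sub_ne_zero.mpr fun e => hne z hz (hinj hw (hsub hz) e)

theorem norm_fourier_log_quotient_le {r : ℝ} {h : ℂ → ℂ} (hhol : DifferentiableOn ℂ h (ball (0 : ℂ) r))
    (hinj : InjOn h (ball (0 : ℂ) r)) {R₁ R₂ M : ℝ} (h1 : 1 < R₁) (hR : R₁ < R₂) (hr : R₂ < r)
    (hM : ∀ z ∈ sphere (0 : ℂ) R₁, ∀ w ∈ sphere (0 : ℂ) R₂, ‖logDerivQuotient h z w‖ ≤ M)
    {n : ℤ} (hn : n ≠ 0) {p : ℕ} (hp : p ≠ 0) :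
    ‖∫ θ in (0 : ℝ)..2 * Real.pi, ∫ θ' in (0 : ℝ)..2 * Real.pi,
        (Real.log (‖exp (I * θ) - exp (I * θ')‖ / ‖h (exp (I * θ)) - h (exp (I * θ'))‖) : ℂ) *
          exp (-I * n * θ) * exp (-I * p * θ')‖ ≤
      2 * Real.pi ^ 2 * R₂ * M * R₁⁻¹ ^ (n.natAbs + p) := by
  have hR₁ : 0 < R₁ := one_pos.trans h1
  have hR₂ : 0 < R₂ := hR₁.trans hR
  have hπ := Real.pi_pos
  have hM0 : 0 ≤ M := (norm_nonneg _).trans (hM R₁ (by simp [hR₁.le]) R₂ (by simp [hR₂.le]))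
  have norm_unit : ∀ θ : ℝ, ‖exp (I * θ)‖ = 1 := fun θ => by
    rw [mul_comm, norm_exp_ofReal_mul_I]
  have hinner : ∀ θ : ℝ, ∫ θ' in (0 : ℝ)..2 * Real.pi,
        (Real.log (‖exp (I * θ) - exp (I * θ')‖ / ‖h (exp (I * θ)) - h (exp (I * θ'))‖) : ℂ) *
          exp (-I * n * θ) * exp (-I * p * θ') =
      I / (2 * p) * ∫ φ in (0 : ℝ)..2 * Real.pi, deriv (circleMap 0 R₂) φ *
        (circleMap 0 R₂ φ ^ (-p : ℤ) *
          (logDerivQuotient h (exp (I * θ)) (circleMap 0 R₂ φ) * exp (-I * n * θ))) := by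
    intro θ
    have hz : ‖exp (I * θ)‖ < R₂ := by rw [norm_unit]; exact h1.trans hR
    have e := congrArg (exp (-I * n * θ) * ·)
      (integral_log_norm_quotient hhol hinj (h1.trans hR).le hr hz hp)
    simp only [circleIntegral, smul_eq_mul, ← intervalIntegral.integral_const_mul] at e ⊢
    refine Eq.trans ?_ (e.trans ?_) <;>
    · refine intervalIntegral.integral_congr fun _ _ => ?_
      ring
  have hcont : Continuous (Function.uncurry fun θ φ : ℝ => deriv (circleMap 0 R₂) φ *
        (circleMap 0 R₂ φ ^ (-p : ℤ) *
          (logDerivQuotient h (exp (I * θ)) (circleMap 0 R₂ φ) * exp (-I * n * θ)))) := by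
    have hq : Continuous fun x : ℝ × ℝ =>
        logDerivQuotient h (exp (I * x.1)) (circleMap 0 R₂ x.2) :=
      (continuousOn_logDerivQuotient hhol hinj hR hr).comp_continuous
        (f := fun x : ℝ × ℝ => (exp (I * x.1), circleMap 0 R₂ x.2)) (by fun_prop) fun x =>
        ⟨by rw [mem_closedBall_zero_iff, norm_unit]; exact h1.le,
          circleMap_mem_sphere _ hR₂.le _⟩
    have hpow : Continuous fun x : ℝ × ℝ => circleMap 0 R₂ x.2 ^ (-p : ℤ) :=
      Continuous.zpow₀ (by fun_prop) _ fun x => Or.inl (circleMap_ne_center hR₂.ne')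
    simp only [Function.uncurry_def, deriv_circleMap]
    fun_prop
  simp_rw [hinner]
  rw [intervalIntegral.integral_const_mul, MeasureTheory.intervalIntegral_intervalIntegral_swap
    ((hcont.continuousOn.integrableOn_compact (isCompact_uIcc.prod isCompact_uIcc)).mono_set
      (prod_mono uIoc_subset_uIcc uIoc_subset_uIcc)), norm_mul]
  have hbound : ∀ φ : ℝ, ‖∫ θ in (0 : ℝ)..2 * Real.pi, deriv (circleMap 0 R₂) φ *
        (circleMap 0 R₂ φ ^ (-p : ℤ) *
          (logDerivQuotient h (exp (I * θ)) (circleMap 0 R₂ φ) * exp (-I * n * θ)))‖ ≤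
      R₂ * (R₁⁻¹ ^ p * (2 * Real.pi * M * R₁⁻¹ ^ n.natAbs)) := by
    intro φ
    have hφ : circleMap 0 R₂ φ ∈ sphere (0 : ℂ) R₂ := circleMap_mem_sphere _ hR₂.le _
    have hφR : ‖circleMap 0 R₂ φ‖ = R₂ := mem_sphere_zero_iff_norm.mp hφ
    have hd := differentiableOn_logDerivQuotient hhol hinj (w := circleMap 0 R₂ φ)
      (by rwa [mem_ball_zero_iff, hφR])
    rw [hφR] at hd
    rw [intervalIntegral.integral_const_mul, intervalIntegral.integral_const_mul, norm_mul,
      norm_mul, deriv_circleMap, norm_mul, hφR, norm_I, mul_one, norm_zpow, hφR, zpow_neg,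
      zpow_natCast, ← inv_pow]
    gcongr
    exact norm_integral_exp_le h1.le hR hd (fun z hz => hM z hz _ hφ) hn
  have hcoef : ‖I / (2 * p : ℂ)‖ ≤ 1 / 2 := by
    have : (1 : ℝ) ≤ p := by exact_mod_cast Nat.one_le_iff_ne_zero.mpr hp
    rw [norm_div, norm_I, norm_mul, Complex.norm_natCast, norm_ofNat]
    gcongr
    linarith
  refine (mul_le_mul hcoef (intervalIntegral.norm_integral_le_of_norm_le_const
    fun φ _ => hbound φ) (norm_nonneg _) (by norm_num)).trans_eq ?_
  rw [sub_zero, abs_of_pos (by positivity), pow_add]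
  ring

/-- The Fourier coefficients of a real kernel at opposite frequencies are conjugate. -/
theorem norm_fourier_real_kernel_neg (K : ℝ → ℝ → ℝ) (n p : ℤ) :
    ‖∫ θ in (0 : ℝ)..2 * Real.pi, ∫ θ' in (0 : ℝ)..2 * Real.pi,
        (K θ θ' : ℂ) * exp (-I * (-n : ℤ) * θ) * exp (-I * (-p : ℤ) * θ')‖ =
      ‖∫ θ in (0 : ℝ)..2 * Real.pi, ∫ θ' in (0 : ℝ)..2 * Real.pi,
        (K θ θ' : ℂ) * exp (-I * n * θ) * exp (-I * p * θ')‖ := by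
  rw [← RCLike.norm_conj, ← intervalIntegral.intervalIntegral_conj]
  simp [← intervalIntegral.intervalIntegral_conj, ← exp_conj]

/-- Exponential decay of Fourier coefficients of `log(|e^{iθ}-e^{iθ'}|/|h(e^{iθ})-h(e^{iθ'})|)`
for `h` univalent on a disk of radius `1 + δ`. -/
theorem fourier_decay_univalent
    (δ : ℝ) (hδ : 0 < δ) (h : ℂ → ℂ)
    (hhol : DifferentiableOn ℂ h (ball (0 : ℂ) (1 + δ)))
    (hinj : Set.InjOn h (ball (0 : ℂ) (1 + δ)))
    (hder : deriv h 0 ≠ 0) :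
    ∃ C : ℝ, 0 < C ∧ ∃ ρ : ℝ, ρ ∈ Set.Ioo (0 : ℝ) 1 ∧
      ∀ n p : ℤ, n ≠ 0 → p ≠ 0 →
        ‖∫ θ in (0:ℝ)..(2 * Real.pi), ∫ θ' in (0:ℝ)..(2 * Real.pi),
            ((Real.log (‖Complex.exp (Complex.I * θ) - Complex.exp (Complex.I * θ')‖ /
                ‖h (Complex.exp (Complex.I * θ)) - h (Complex.exp (Complex.I * θ'))‖) : ℝ) : ℂ) *
              Complex.exp (-Complex.I * n * θ) * Complex.exp (-Complex.I * p * θ')‖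
          ≤ C * ρ ^ (n.natAbs + p.natAbs) := by
  obtain ⟨R₁, h1, hR₁⟩ := exists_between (lt_add_of_pos_right (1 : ℝ) hδ)
  obtain ⟨R₂, hR, hr⟩ := exists_between hR₁
  have hpos : 0 < R₁ := one_pos.trans h1
  obtain ⟨M, hM⟩ := ((isCompact_closedBall (0 : ℂ) R₁).prod
    (isCompact_sphere (0 : ℂ) R₂)).exists_bound_of_continuousOn
      (continuousOn_logDerivQuotient hhol hinj hR hr)
  have hbound : ∀ z ∈ sphere (0 : ℂ) R₁, ∀ w ∈ sphere (0 : ℂ) R₂,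
      ‖logDerivQuotient h z w‖ ≤ max M 1 := fun z hz w hw =>
    (hM (z, w) ⟨sphere_subset_closedBall hz, hw⟩).trans (le_max_left _ _)
  have hM' : 0 < max M 1 := lt_max_of_lt_right one_pos
  have hR₂ : 0 < R₂ := hpos.trans hR
  have hπ := Real.pi_pos
  refine ⟨2 * Real.pi ^ 2 * R₂ * max M 1, by positivity, R₁⁻¹,
    ⟨inv_pos.mpr hpos, inv_lt_one_of_one_lt₀ h1⟩, fun n p hn hp => ?_⟩
  obtain ⟨k, rfl | rfl⟩ := p.eq_nat_or_neg
  · simpa using norm_fourier_log_quotient_le hhol hinj h1 hR hr hbound hn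
      (p := k) (by simpa using hp)
  · have hk := norm_fourier_log_quotient_le hhol hinj h1 hR hr hbound (n := -n)
      (neg_ne_zero.mpr hn) (p := k) (by simpa using hp)
    rw [Int.natAbs_neg] at hk
    rw [Int.natAbs_neg, Int.natAbs_natCast, ← norm_fourier_real_kernel_neg, neg_neg]
    exact hk
end
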